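/- For all integers k ≥ 2, l ≥ 0 and all p ∈ (0,1], the following exact identity holds: A₁·A₂·A₃ = C(k,l)·p^{k+l-1}·(1-p)^{C(k,2)-(k+l-1)}, where A₁ = (1-(1-p)^k)^{k-1}, A₂ = Pr[TREE], and A₃ = Pr[BIN[M*,p] = l] is the probability that a binomial random variable with a random number M* of trials and success probability p equals l (i.e. A₃ = E[Pr[Bin(M,p)=l] | TREE]). -/

import Mathlib

open Filter Topology Real Finset

-- Indicator of a proposition, as a real number.
open Classical in
noncomputable def ind (P : Prop) : ℝ := if P then 1 else 0

/-- `connGraphCount k l` is the number of connected labeled graphs on `k` vertices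
with `k - 1 + l` edges (i.e. complexity `l`). -/
noncomputable def connGraphCount (k l : ℕ) : ℕ :=
  Set.ncard {G : SimpleGraph (Fin k) | G.Connected ∧ G.edgeSet.ncard = k - 1 + l}

/-- Weight of a placement `T` of the `k-1` balls into the `k` bins under the tilted
(truncated geometric) distribution: ball `j` goes into bin `(T j).val + 1` with
probability `p (1-p)^{(T j).val} / (1-(1-p)^k)`. -/
noncomputable def wt (k : ℕ) (p : ℝ) (T : Fin (k - 1) → Fin k) : ℝ :=
  ∏ j, p * (1 - p) ^ ((T j : ℕ)) / (1 - (1 - p) ^ k)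

/-- The event TREE: for all `1 ≤ t ≤ k-1`, `Z_1 + ⋯ + Z_t ≥ t`, i.e. at least `t`
balls land in the first `t` bins (equivalently `Y_t > 0`). -/
def TREEevt (k : ℕ) (T : Fin (k - 1) → Fin k) : Prop :=
  ∀ t, 1 ≤ t → t ≤ k - 1 →
    t ≤ (Finset.univ.filter (fun j => ((T j : ℕ) < t))).card

/-- `M = C(k,2) - ∑_j T_j` where ball `j` sits in bin `(T j).val + 1`. -/
def Mval (k : ℕ) (T : Fin (k - 1) → Fin k) : ℤ :=
  (Nat.choose k 2 : ℤ) - ∑ j, ((T j : ℕ) + 1 : ℤ)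

/-- `A₂ = Pr[TREE]` under the tilted balls-into-bins distribution. -/
noncomputable def treeProb (k : ℕ) (p : ℝ) : ℝ :=
  ∑ T : Fin (k - 1) → Fin k, wt k p T * ind (TREEevt k T)

/-- Probability that a binomial with `m` trials and success probability `p` equals `l`. -/
noncomputable def binP (p : ℝ) (m : ℤ) (l : ℕ) : ℝ :=
  (m.toNat.choose l : ℝ) * p ^ l * (1 - p) ^ (m.toNat - l)

/-- `A₃ = Pr[BIN[M*, p] = l] = E[Pr[Bin(M,p) = l] | TREE]`. -/
noncomputable def A3 (k l : ℕ) (p : ℝ) : ℝ :=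
  (∑ T : Fin (k - 1) → Fin k, wt k p T * ind (TREEevt k T) * binP p (Mval k T) l) /
    treeProb k p


/-- Position of `v` when the vertices are sorted lexicographically by `(κ v, v)`. -/
def posn {n : ℕ} (κ : Fin n → ℕ) (v : Fin n) : ℕ :=
  (Finset.univ.filter (fun u => κ u < κ v ∨ (κ u = κ v ∧ u < v))).card

theorem posn_lt_of {n : ℕ} (κ : Fin n → ℕ) {u v : Fin n}
    (h : κ u < κ v ∨ (κ u = κ v ∧ u < v)) : posn κ u < posn κ v := by
  unfold posn
  apply Finset.card_lt_card
  rw [Finset.ssubset_iff_of_subset]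
  · refine ⟨u, ?_, ?_⟩
    · simp only [Finset.mem_filter, Finset.mem_univ, true_and]; exact h
    · simp
  · intro w hw
    simp only [Finset.mem_filter, Finset.mem_univ, true_and] at hw ⊢
    rcases hw with hw | ⟨hw, hw'⟩ <;> rcases h with h | ⟨h, h'⟩
    · left; omega
    · left; omega
    · left; omega
    · right; exact ⟨by omega, hw'.trans h'⟩

theorem posn_inj {n : ℕ} (κ : Fin n → ℕ) : Function.Injective (posn κ) := by
  intro u v h
  by_contra hne
  have h3 : (κ u < κ v ∨ (κ u = κ v ∧ u < v)) ∨ (κ v < κ u ∨ (κ v = κ u ∧ v < u)) := by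
    rcases lt_trichotomy (κ u) (κ v) with h1 | h1 | h1
    · exact Or.inl (Or.inl h1)
    · rcases lt_or_gt_of_ne hne with h2 | h2
      · exact Or.inl (Or.inr ⟨h1, h2⟩)
      · exact Or.inr (Or.inr ⟨h1.symm, h2⟩)
    · exact Or.inr (Or.inl h1)
  rcases h3 with h3 | h3
  · have := posn_lt_of κ h3; omega
  · have := posn_lt_of κ h3; omega

theorem posn_lt {n : ℕ} (κ : Fin n → ℕ) (v : Fin n) : posn κ v < n := by
  have h : posn κ v < (Finset.univ : Finset (Fin n)).card := by
    unfold posn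
    apply Finset.card_lt_card
    rw [Finset.ssubset_iff_of_subset (Finset.subset_univ _)]
    exact ⟨v, Finset.mem_univ _, by simp⟩
  simpa using h

theorem posn_image {n : ℕ} (κ : Fin n → ℕ) :
    Finset.univ.image (posn κ) = Finset.range n := by
  apply Finset.eq_of_subset_of_card_le
  · intro x hx
    simp only [Finset.mem_image, Finset.mem_univ, true_and] at hx
    obtain ⟨v, rfl⟩ := hx
    exact Finset.mem_range.2 (posn_lt κ v)
  · rw [Finset.card_image_of_injective _ (posn_inj κ)]; simp

theorem posn_surj {n : ℕ} (κ : Fin n → ℕ) {t : ℕ} (ht : t < n) : ∃ u, posn κ u = t := by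
  have : t ∈ Finset.univ.image (posn κ) := by rw [posn_image]; exact Finset.mem_range.2 ht
  simpa using this

/-- If enough vertices have small key, then small position forces small key. -/
theorem key_le_of_posn_le {n : ℕ} (κ : Fin n → ℕ) {t : ℕ} {u : Fin n}
    (h : t < (Finset.univ.filter (fun w => κ w ≤ t)).card) (hu : posn κ u ≤ t) : κ u ≤ t := by
  by_contra hlt
  have : (Finset.univ.filter (fun w => κ w ≤ t)).card ≤ posn κ u := by
    unfold posn
    apply Finset.card_le_card
    intro w hw
    simp only [Finset.mem_filter, Finset.mem_univ, true_and] at hw ⊢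
    left; omega
  omega

theorem posn_congr {n : ℕ} (κ κ' : Fin n → ℕ) {t : ℕ}
    (h1 : ∀ v, κ v ≤ t → κ' v = κ v) (h2 : ∀ v, κ' v ≤ t → κ v = κ' v)
    {v : Fin n} (hv : κ v ≤ t) : posn κ' v = posn κ v := by
  unfold posn
  congr 1
  ext w
  simp only [Finset.mem_filter, Finset.mem_univ, true_and]
  have a := h1 v hv
  have b := h1 w
  have c := h2 w
  constructor
  · rintro (h | ⟨h, h'⟩)
    · left; have := c (by omega); omega
    · right; have := c (by omega); exact ⟨by omega, h'⟩
  · rintro (h | ⟨h, h'⟩)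
    · left; have := b (by omega); omega
    · right; have := b (by omega); exact ⟨by omega, h'⟩

/-- A valid key function. -/
structure Valid {m : ℕ} (κ : Fin (m + 1) → ℕ) : Prop where
  zero : κ 0 = 0
  pos : ∀ v, v ≠ 0 → 1 ≤ κ v
  le : ∀ v, κ v ≤ m + 1
  tree : ∀ t, t ≤ m → t < (Finset.univ.filter (fun w => κ w ≤ t)).card

/-- `G` is explored by breadth-first search according to the key function `κ`. -/
def Compat {m : ℕ} (κ : Fin (m + 1) → ℕ) (G : SimpleGraph (Fin (m + 1))) : Prop :=
  (∀ u v, posn κ u + 1 < κ v → ¬ G.Adj u v) ∧ (∀ u v, posn κ u + 1 = κ v → G.Adj u v)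

theorem Valid.key_le {m : ℕ} {κ : Fin (m + 1) → ℕ} (h : Valid κ) (v : Fin (m + 1)) :
    κ v ≤ posn κ v := by
  by_contra hlt
  have h1 := h.le v
  have h2 := h.tree (κ v - 1) (by omega)
  have h3 := key_le_of_posn_le κ h2 (u := v) (by omega)
  omega

theorem compat_half {m : ℕ} {κ κ' : Fin (m + 1) → ℕ} {G : SimpleGraph (Fin (m + 1))}
    (h : Valid κ) (hc : Compat κ G) (hc' : Compat κ' G) {t : ℕ}
    (h1 : ∀ v, κ v ≤ t → κ' v = κ v) (h2 : ∀ v, κ' v ≤ t → κ v = κ' v) :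
    ∀ v, κ v ≤ t + 1 → κ' v = κ v := by
  intro v hv
  by_cases hvt : κ v ≤ t
  · exact h1 v hvt
  have e : κ v = t + 1 := by omega
  have := h.le v
  obtain ⟨u, hu⟩ := posn_surj κ (t := t) (by omega)
  have hk := key_le_of_posn_le κ (h.tree t (by omega)) (u := u) (by omega)
  have hp := posn_congr κ κ' h1 h2 hk
  have hadj := hc.2 u v (by omega)
  have g1 := h2 v
  by_contra hne
  exact hc'.1 u v (by omega) hadj

theorem compat_unique {m : ℕ} {κ κ' : Fin (m + 1) → ℕ} {G : SimpleGraph (Fin (m + 1))}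
    (h : Valid κ) (h' : Valid κ') (hc : Compat κ G) (hc' : Compat κ' G) : κ = κ' := by
  have key : ∀ t, (∀ v, κ v ≤ t → κ' v = κ v) ∧ (∀ v, κ' v ≤ t → κ v = κ' v) := by
    intro t
    induction t with
    | zero =>
      constructor
      · intro v hv
        have : v = 0 := by
          by_contra hne
          have := h.pos v hne
          omega
        rw [this, h.zero, h'.zero]
      · intro v hv
        have : v = 0 := by
          by_contra hne
          have := h'.pos v hne
          omega
        rw [this, h.zero, h'.zero]
    | succ t ih =>
      exact ⟨compat_half h hc hc' ih.1 ih.2, compat_half h' hc' hc ih.2 ih.1⟩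
  funext v
  exact ((key (κ v)).1 v le_rfl).symm

theorem compat_connected {m : ℕ} {κ : Fin (m + 1) → ℕ} {G : SimpleGraph (Fin (m + 1))}
    (h : Valid κ) (hc : Compat κ G) : G.Connected := by
  have key : ∀ s, ∀ v, posn κ v < s → G.Reachable 0 v := by
    intro s
    induction s with
    | zero => intro v hv; omega
    | succ s ih =>
      intro v hv
      by_cases hv0 : v = 0
      · rw [hv0]
      have h1 := h.pos v hv0
      have h2 := h.key_le v
      have h3 := posn_lt κ v
      obtain ⟨u, hu⟩ := posn_surj κ (t := κ v - 1) (by omega)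
      exact (ih u (by omega)).trans (hc.2 u v (by omega)).reachable
  have h0 : ∀ v, G.Reachable 0 v := fun v => key _ v (Nat.lt_succ_self _)
  exact { preconnected := fun u v => (h0 u).symm.trans (h0 v), nonempty := ⟨0⟩ }

theorem exists_crossing {V : Type*} {G : SimpleGraph V} (S : V → Prop) {a b : V}
    (hab : G.Reachable a b) (ha : S a) (hb : ¬ S b) : ∃ x y, G.Adj x y ∧ S x ∧ ¬ S y := by
  obtain ⟨w⟩ := hab
  induction w with
  | nil => exact absurd ha hb
  | @cons a c b hadj w ih =>
    by_cases hc : S c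
    · exact ih hc hb
    · exact ⟨_, _, hadj, ha, hc⟩

theorem compat_partial {m : ℕ} {G : SimpleGraph (Fin (m + 1))} (hG : G.Connected) (t : ℕ)
    (ht : t ≤ m) : ∃ κ : Fin (m + 1) → ℕ, κ 0 = 0 ∧ (∀ v, v ≠ 0 → 1 ≤ κ v) ∧
      (∀ v, κ v ≤ t + 1) ∧
      (∀ s, s ≤ t → s < (Finset.univ.filter (fun w => κ w ≤ s)).card) ∧
      (∀ u v, posn κ u + 1 < κ v → ¬ G.Adj u v) ∧
      (∀ u v, posn κ u + 1 = κ v → κ v ≤ t → G.Adj u v) := by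
  classical
  induction t with
  | zero =>
    refine ⟨fun v => if v = 0 then 0 else 1, by simp, ?_, ?_, ?_, ?_, ?_⟩
    · intro v hv; simp [hv]
    · intro v; dsimp only; split_ifs <;> omega
    · intro s hs
      obtain rfl : s = 0 := by omega
      apply Finset.card_pos.2
      exact ⟨0, by simp⟩
    · intro u v huv
      dsimp only at huv
      split_ifs at huv <;> omega
    · intro u v huv hv
      omega
  | succ t ih =>
    obtain ⟨κ, h0, hpos, hle, htree, hno, hyes⟩ := ih (by omega)
    set κ' : Fin (m + 1) → ℕ := fun v => if κ v ≤ t then κ v else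
      if ∃ u, posn κ u = t ∧ G.Adj u v then t + 1 else t + 2 with hκ'
    have e1 : ∀ v, κ v ≤ t → κ' v = κ v := by
      intro v hv; simp only [hκ', if_pos hv]
    have e1' : ∀ v, ¬ κ v ≤ t → κ' v = t + 1 ∨ κ' v = t + 2 := by
      intro v hv; simp only [hκ', if_neg hv]; split_ifs <;> simp
    have e2 : ∀ v, κ' v ≤ t → κ v = κ' v := by
      intro v hv
      by_cases h : κ v ≤ t
      · exact (e1 v h).symm
      · rcases e1' v h with h | h <;> omega
    have e3 : ∀ v, κ' v = t + 1 → ∃ u, posn κ u = t ∧ G.Adj u v := by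
      intro v hv
      have : ¬ κ v ≤ t := fun h => by have := e1 v h; omega
      by_contra hne
      simp only [hκ', if_neg this, if_neg hne] at hv
      omega
    have e4 : ∀ v, κ' v = t + 2 → κ v = t + 1 ∧ ¬ ∃ u, posn κ u = t ∧ G.Adj u v := by
      intro v hv
      have h1 : ¬ κ v ≤ t := fun h => by have := e1 v h; omega
      have := hle v
      refine ⟨by omega, fun hne => ?_⟩
      simp only [hκ', if_neg h1, if_pos hne] at hv
      omega
    have hcard : ∀ s, s ≤ t → s < (Finset.univ.filter (fun w => κ' w ≤ s)).card := by
      intro s hs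
      refine lt_of_lt_of_le (htree s hs) (Finset.card_le_card ?_)
      intro w hw
      simp only [Finset.mem_filter, Finset.mem_univ, true_and] at hw ⊢
      rw [e1 w (by omega)]; exact hw
    have hpp : ∀ u, posn κ' u ≤ t → posn κ' u = posn κ u := by
      intro u hu
      have := key_le_of_posn_le κ' (hcard t le_rfl) hu
      exact posn_congr κ κ' e1 e2 (by rw [e2 u this]; exact this)
    have hpp' : ∀ u, posn κ u ≤ t → posn κ' u = posn κ u := by
      intro u hu
      have := key_le_of_posn_le κ (htree t le_rfl) hu
      exact posn_congr κ κ' e1 e2 this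
    have hle' : ∀ v, κ' v ≤ t + 2 := by
      intro v
      by_cases h : κ v ≤ t
      · have := e1 v h; omega
      · rcases e1' v h with h | h <;> omega
    have hno' : ∀ u v, posn κ' u + 1 < κ' v → ¬ G.Adj u v := by
      intro u v huv
      have h1 := hle' v
      have h2 := hpp u (by omega)
      by_cases h : κ v ≤ t
      · have := e1 v h
        exact hno u v (by omega)
      have h3 := hle v
      rcases e1' v h with h4 | h4
      · exact hno u v (by omega)
      · have h5 := (e4 v h4).2
        by_cases h6 : posn κ u = t
        · intro hadj
          exact h5 ⟨u, h6, hadj⟩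
        · exact hno u v (by omega)
    refine ⟨κ', by rw [e1 0 (by omega), h0], ?_, hle', ?_, hno', ?_⟩
    · intro v hv
      have := hpos v hv
      by_cases h : κ v ≤ t
      · rw [e1 v h]; exact this
      · rcases e1' v h with h | h <;> omega
    · intro s hs
      by_cases hst : s ≤ t
      · exact hcard s hst
      have hs' : s = t + 1 := by omega
      subst hs'
      by_contra hcon
      have hnot : ∃ b, ¬ κ' b ≤ t + 1 := by
        by_contra hall
        push Not at hall
        apply hcon
        rw [Finset.filter_true_of_mem (fun x _ => hall x)]
        simp; omega
      obtain ⟨b, hb⟩ := hnot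
      obtain ⟨x, y, hxy, hx, hy⟩ := exists_crossing (fun v => κ' v ≤ t + 1)
        (hG.preconnected 0 b) (by rw [e1 0 (by omega)]; omega) hb
      have hy2 : κ' y = t + 2 := by have := hle' y; omega
      have hxp : posn κ' x < (Finset.univ.filter (fun w => κ' w ≤ t + 1)).card := by
        unfold posn
        apply Finset.card_lt_card
        rw [Finset.ssubset_iff_of_subset]
        · exact ⟨x, by simpa using hx, by simp⟩
        · intro w hw
          simp only [Finset.mem_filter, Finset.mem_univ, true_and] at hw ⊢
          omega
      exact hno' x y (by omega) hxy
    · intro u v huv hv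
      have h2 := hpp u (by omega)
      by_cases h : κ v ≤ t
      · have := e1 v h
        exact hyes u v (by omega) h
      · have h3 : κ' v = t + 1 := by rcases e1' v h with h4 | h4 <;> omega
        obtain ⟨w, hw, hadj⟩ := e3 v h3
        have : w = u := posn_inj κ (by omega)
        rw [← this]; exact hadj

theorem compat_exists {m : ℕ} {G : SimpleGraph (Fin (m + 1))} (hG : G.Connected) :
    ∃ κ : Fin (m + 1) → ℕ, Valid κ ∧ Compat κ G := by
  obtain ⟨κ, h0, hpos, hle, htree, hno, hyes⟩ := compat_partial hG m le_rfl
  refine ⟨κ, ⟨h0, hpos, hle, htree⟩, hno, ?_⟩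
  intro u v huv
  refine hyes u v huv ?_
  have h1 := htree m le_rfl
  have h2 : (Finset.univ.filter (fun w => κ w ≤ m)) = Finset.univ := by
    apply Finset.eq_univ_of_card
    apply le_antisymm (Finset.card_le_univ _)
    simp only [Fintype.card_fin]; omega
  have : v ∈ Finset.univ.filter (fun w => κ w ≤ m) := by rw [h2]; simp
  simpa using this

/-! ### Counting compatible graphs -/

/-- Forced pairs. -/
def reqP {m : ℕ} (κ : Fin (m + 1) → ℕ) : Finset (Fin (m + 1) × Fin (m + 1)) :=
  Finset.univ.filter (fun x => posn κ x.1 + 1 = κ x.2)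

/-- Free pairs. -/
def freeP {m : ℕ} (κ : Fin (m + 1) → ℕ) : Finset (Fin (m + 1) × Fin (m + 1)) :=
  Finset.univ.filter (fun x => κ x.2 ≤ posn κ x.1 ∧ posn κ x.1 < posn κ x.2)

theorem card_prod_filter {α : Type*} [Fintype α] (P : α → α → Prop) [∀ a b, Decidable (P a b)] :
    ((Finset.univ : Finset (α × α)).filter (fun x => P x.1 x.2)).card =
      ∑ v : α, (Finset.univ.filter (fun u => P u v)).card := by
  simp only [Finset.card_filter]
  rw [Fintype.sum_prod_type_right]

theorem card_posn_Ico {n : ℕ} (κ : Fin n → ℕ) (a b : ℕ) (hb : b ≤ n) :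
    (Finset.univ.filter (fun u => a ≤ posn κ u ∧ posn κ u < b)).card = b - a := by
  rw [← Finset.card_image_of_injective _ (posn_inj κ), ← Nat.card_Ico]
  congr 1
  ext x
  simp only [Finset.mem_image, Finset.mem_filter, Finset.mem_univ, true_and, Finset.mem_Ico]
  constructor
  · rintro ⟨u, hu, rfl⟩; exact hu
  · intro hx
    obtain ⟨u, rfl⟩ := posn_surj κ (t := x) (by omega)
    exact ⟨u, hx, rfl⟩

theorem sum_posn {n : ℕ} (κ : Fin n → ℕ) : ∑ v, posn κ v = n.choose 2 := by
  have : ∑ v, posn κ v = ∑ x ∈ Finset.univ.image (posn κ), x := by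
    rw [Finset.sum_image (fun a _ b _ h => posn_inj κ h)]
  rw [this, posn_image, Finset.sum_range_id, Nat.choose_two_right]

theorem card_reqP {m : ℕ} {κ : Fin (m + 1) → ℕ} (h : Valid κ) : (reqP κ).card = m := by
  unfold reqP
  rw [card_prod_filter (fun u v => posn κ u + 1 = κ v), Fin.sum_univ_succ]
  have h0 : (Finset.univ.filter (fun u => posn κ u + 1 = κ 0)).card = 0 := by
    rw [h.zero]; simp
  rw [h0]
  have : ∀ v : Fin m, (Finset.univ.filter (fun u => posn κ u + 1 = κ v.succ)).card = 1 := by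
    intro v
    have h1 := h.pos v.succ (Fin.succ_ne_zero v)
    have h2 := h.le v.succ
    have h3 : (κ v.succ) - (κ v.succ - 1) = 1 := by omega
    refine Eq.trans ?_ ((card_posn_Ico κ (κ v.succ - 1) (κ v.succ) h2).trans h3)
    congr 1
    ext u
    simp only [Finset.mem_filter, Finset.mem_univ, true_and]
    omega
  simp [this]

theorem card_freeP {m : ℕ} {κ : Fin (m + 1) → ℕ} (h : Valid κ) :
    (freeP κ).card + ∑ v, κ v = (m + 1).choose 2 := by
  unfold freeP
  rw [card_prod_filter (fun u v => κ v ≤ posn κ u ∧ posn κ u < posn κ v),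
    ← sum_posn κ, ← Finset.sum_add_distrib]
  refine Finset.sum_congr rfl fun v _ => ?_
  rw [card_posn_Ico κ _ _ (posn_lt κ v).le]
  have := h.key_le v
  omega

theorem edge_card {m : ℕ} (κ : Fin (m + 1) → ℕ) (G : SimpleGraph (Fin (m + 1)))
    [DecidableRel G.Adj] : G.edgeSet.ncard =
    ((Finset.univ : Finset (Fin (m + 1) × Fin (m + 1))).filter
      (fun x => posn κ x.1 < posn κ x.2 ∧ G.Adj x.1 x.2)).card := by
  rw [← Finset.card_image_of_injOn (f := fun x : Fin (m + 1) × Fin (m + 1) => s(x.1, x.2)),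
    ← Set.ncard_coe_finset]
  · congr 1
    ext e
    induction e with
    | _ a b =>
    simp only [SimpleGraph.mem_edgeSet, Finset.coe_image, Set.mem_image, Finset.mem_coe,
      Finset.mem_filter, Finset.mem_univ, true_and, Prod.exists, Sym2.eq_iff]
    constructor
    · intro hab
      rcases lt_trichotomy (posn κ a) (posn κ b) with h | h | h
      · exact ⟨a, b, ⟨h, hab⟩, Or.inl ⟨rfl, rfl⟩⟩
      · exact absurd (posn_inj κ h) hab.ne
      · exact ⟨b, a, ⟨h, hab.symm⟩, Or.inr ⟨rfl, rfl⟩⟩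
    · rintro ⟨x, y, ⟨_, hxy⟩, ⟨rfl, rfl⟩ | ⟨rfl, rfl⟩⟩
      · exact hxy
      · exact hxy.symm
  · rintro ⟨a, b⟩ hab ⟨c, d⟩ hcd h
    simp only [Finset.coe_filter, Finset.mem_univ, true_and, Set.mem_ofPred_eq] at hab hcd
    simp only [Sym2.eq_iff] at h
    rcases h with ⟨rfl, rfl⟩ | ⟨rfl, rfl⟩
    · rfl
    · omega

theorem edge_card_compat {m : ℕ} {κ : Fin (m + 1) → ℕ} {G : SimpleGraph (Fin (m + 1))}
    [DecidableRel G.Adj] (h : Valid κ) (hc : Compat κ G) :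
    G.edgeSet.ncard = m + ((freeP κ).filter (fun x => G.Adj x.1 x.2)).card := by
  refine Eq.trans ?_ (congrArg (fun x => x + _) (card_reqP h))
  rw [edge_card κ G, ← Finset.card_union_of_disjoint]
  · congr 1
    ext ⟨u, v⟩
    have h1 := h.key_le v
    have h2 := hc.1 u v
    have h3 := hc.2 u v
    simp only [reqP, freeP, Finset.mem_union, Finset.mem_filter, Finset.mem_univ, true_and]
    constructor
    · rintro ⟨ha, hb⟩
      by_cases e : posn κ u + 1 = κ v
      · exact Or.inl e
      · have : ¬ posn κ u + 1 < κ v := fun h => h2 h hb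
        exact Or.inr ⟨⟨by omega, ha⟩, hb⟩
    · rintro (ha | ⟨⟨ha, hb⟩, hc⟩)
      · exact ⟨by omega, h3 ha⟩
      · exact ⟨hb, hc⟩
  · rw [Finset.disjoint_left]
    rintro ⟨u, v⟩ ha hb
    simp only [reqP, freeP, Finset.mem_filter, Finset.mem_univ, true_and] at ha hb
    omega

/-- The graph with forced edges and the chosen free edges. -/
def mkG {m : ℕ} (κ : Fin (m + 1) → ℕ) (S : Finset (Fin (m + 1) × Fin (m + 1))) :
    SimpleGraph (Fin (m + 1)) where
  Adj u v := (posn κ u < posn κ v ∧ (posn κ u + 1 = κ v ∨ (u, v) ∈ S)) ∨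
    (posn κ v < posn κ u ∧ (posn κ v + 1 = κ u ∨ (v, u) ∈ S))
  symm := ⟨fun _ _ h => h.symm⟩
  loopless := ⟨fun u h => by rcases h with ⟨h, _⟩ | ⟨h, _⟩ <;> omega⟩

theorem mkG_adj {m : ℕ} {κ : Fin (m + 1) → ℕ} {S : Finset (Fin (m + 1) × Fin (m + 1))}
    {u v : Fin (m + 1)} (h : posn κ u < posn κ v) :
    (mkG κ S).Adj u v ↔ (posn κ u + 1 = κ v ∨ (u, v) ∈ S) := by
  constructor
  · rintro (⟨_, h1⟩ | ⟨h1, _⟩)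
    · exact h1
    · omega
  · intro h1; exact Or.inl ⟨h, h1⟩

theorem mkG_compat {m : ℕ} {κ : Fin (m + 1) → ℕ} {S : Finset (Fin (m + 1) × Fin (m + 1))}
    (h : Valid κ) (hS : S ⊆ freeP κ) : Compat κ (mkG κ S) := by
  constructor
  · intro u v huv
    have := h.key_le v
    rw [mkG_adj (by omega)]
    rintro (h1 | h1)
    · omega
    · have := hS h1
      simp only [freeP, Finset.mem_filter, Finset.mem_univ, true_and] at this
      omega
  · intro u v huv
    have := h.key_le v
    rw [mkG_adj (by omega)]
    exact Or.inl huv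

theorem mkG_filter {m : ℕ} {κ : Fin (m + 1) → ℕ} {S : Finset (Fin (m + 1) × Fin (m + 1))}
    [DecidableRel (mkG κ S).Adj]
    (hS : S ⊆ freeP κ) : (freeP κ).filter (fun x => (mkG κ S).Adj x.1 x.2) = S := by
  ext ⟨u, v⟩
  rw [Finset.mem_filter]
  constructor
  · rintro ⟨h1, h2⟩
    simp only [freeP, Finset.mem_filter, Finset.mem_univ, true_and] at h1
    rw [mkG_adj h1.2] at h2
    rcases h2 with h2 | h2
    · omega
    · exact h2
  · intro h1
    refine ⟨hS h1, ?_⟩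
    have := hS h1
    simp only [freeP, Finset.mem_filter, Finset.mem_univ, true_and] at this
    exact (mkG_adj this.2).2 (Or.inr h1)

open Classical in
theorem mkG_of_compat {m : ℕ} {κ : Fin (m + 1) → ℕ} {G : SimpleGraph (Fin (m + 1))}
    (hc : Compat κ G) :
    mkG κ ((freeP κ).filter (fun x => G.Adj x.1 x.2)) = G := by
  have key : ∀ u v, posn κ u < posn κ v →
      ((mkG κ ((freeP κ).filter (fun x => G.Adj x.1 x.2))).Adj u v ↔ G.Adj u v) := by
    intro u v huv
    rw [mkG_adj huv]
    simp only [freeP, Finset.mem_filter, Finset.mem_univ, true_and]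
    constructor
    · rintro (h1 | ⟨_, h1⟩)
      · exact hc.2 u v h1
      · exact h1
    · intro h1
      by_cases e : posn κ u + 1 = κ v
      · exact Or.inl e
      · have : ¬ posn κ u + 1 < κ v := fun h => hc.1 u v h h1
        exact Or.inr ⟨⟨by omega, huv⟩, h1⟩
  ext u v
  rcases lt_trichotomy (posn κ u) (posn κ v) with h | h | h
  · exact key u v h
  · have := posn_inj κ h
    subst this
    simp
  · rw [SimpleGraph.adj_comm, key v u h, SimpleGraph.adj_comm]

open Classical in
theorem card_compat {m : ℕ} {κ : Fin (m + 1) → ℕ} (h : Valid κ) (l : ℕ) :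
    ((Finset.univ : Finset (SimpleGraph (Fin (m + 1)))).filter
      (fun G => Compat κ G ∧ G.edgeSet.ncard = m + l)).card = (freeP κ).card.choose l := by
  rw [← Finset.card_powersetCard]
  symm
  apply Finset.card_bij' (i := fun S _ => mkG κ S)
    (j := fun G _ => (freeP κ).filter (fun x => G.Adj x.1 x.2))
  · intro S hS
    rw [Finset.mem_powersetCard] at hS
    have hc := mkG_compat h hS.1
    refine Finset.mem_filter.2 ⟨Finset.mem_univ _, hc, ?_⟩
    rw [edge_card_compat h hc, mkG_filter hS.1, hS.2]
  · intro G hG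
    rw [Finset.mem_filter] at hG
    rw [Finset.mem_powersetCard]
    refine ⟨Finset.filter_subset _ _, ?_⟩
    have := edge_card_compat h hG.2.1
    have := hG.2.2
    omega
  · intro S hS
    rw [Finset.mem_powersetCard] at hS
    exact mkG_filter hS.1
  · intro G hG
    rw [Finset.mem_filter] at hG
    exact mkG_of_compat hG.2.1

/-! ### Placements of balls -/

/-- The key function of a placement. -/
def kap {m : ℕ} (T : Fin m → Fin (m + 1)) : Fin (m + 1) → ℕ :=
  Fin.cons 0 (fun j => (T j : ℕ) + 1)

theorem kap_zero {m : ℕ} (T : Fin m → Fin (m + 1)) : kap T 0 = 0 := rfl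

theorem kap_succ {m : ℕ} (T : Fin m → Fin (m + 1)) (j : Fin m) :
    kap T j.succ = (T j : ℕ) + 1 := rfl

theorem kap_inj {m : ℕ} {T T' : Fin m → Fin (m + 1)} (h : kap T = kap T') : T = T' := by
  funext j
  have := congrFun h j.succ
  rw [kap_succ, kap_succ] at this
  exact Fin.ext (by omega)

theorem kap_card {m : ℕ} (T : Fin m → Fin (m + 1)) (t : ℕ) :
    (Finset.univ.filter (fun w => kap T w ≤ t)).card =
      1 + (Finset.univ.filter (fun j => ((T j : ℕ) < t))).card := by
  simp only [Finset.card_filter]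
  rw [Fin.sum_univ_succ]
  simp only [kap_zero, kap_succ, Nat.zero_le, if_true, Nat.succ_le_iff]

theorem kap_valid {m : ℕ} (T : Fin m → Fin (m + 1)) : Valid (kap T) ↔ TREEevt (m + 1) T := by
  constructor
  · intro h t h1 h2
    have h3 := h.tree t h2
    rw [kap_card] at h3
    have : t ≤ (Finset.univ.filter (fun j => ((T j : ℕ) < t))).card := by omega
    exact this
  · intro h
    refine ⟨kap_zero T, ?_, ?_, ?_⟩
    · intro v hv
      obtain ⟨j, rfl⟩ := Fin.exists_succ_eq.2 hv
      rw [kap_succ]; omega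
    · intro v
      refine Fin.cases ?_ (fun j => ?_) v
      · rw [kap_zero]; omega
      · rw [kap_succ]; exact (T j).isLt
    · intro t ht
      rw [kap_card]
      by_cases h0 : t = 0
      · omega
      · have h3 : t ≤ (Finset.univ.filter (fun j => ((T j : ℕ) < t))).card :=
          h t (by omega) ht
        omega

theorem exists_kap {m : ℕ} {κ : Fin (m + 1) → ℕ} (h : Valid κ) :
    ∃ T : Fin m → Fin (m + 1), kap T = κ := by
  refine ⟨fun j => ⟨κ j.succ - 1, by have := h.le j.succ; omega⟩, ?_⟩
  funext v
  refine Fin.cases ?_ (fun j => ?_) v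
  · rw [kap_zero, h.zero]
  · rw [kap_succ]
    have := h.pos j.succ (Fin.succ_ne_zero j)
    dsimp only
    omega

theorem kap_Mval {m : ℕ} {T : Fin m → Fin (m + 1)} (h : TREEevt (m + 1) T) :
    Mval (m + 1) T = ((freeP (kap T)).card : ℤ) := by
  have h1 := card_freeP ((kap_valid T).2 h)
  rw [Fin.sum_univ_succ] at h1
  simp only [kap_zero, kap_succ] at h1
  have h2 : Mval (m + 1) T = ((m + 1).choose 2 : ℤ) - ∑ j : Fin m, ((T j : ℕ) + 1 : ℤ) := rfl
  rw [h2, ← h1]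
  push_cast
  ring

open Classical in
theorem core {m : ℕ} (l : ℕ) :
    connGraphCount (m + 1) l =
      ∑ T ∈ (Finset.univ : Finset (Fin m → Fin (m + 1))).filter (fun T => TREEevt (m + 1) T),
        (Mval (m + 1) T).toNat.choose l := by
  have hset : {G : SimpleGraph (Fin (m + 1)) | G.Connected ∧
      G.edgeSet.ncard = m + 1 - 1 + l} =
      ((((Finset.univ : Finset (Fin m → Fin (m + 1))).filter (fun T => TREEevt (m + 1) T)).biUnion
        (fun T => (Finset.univ : Finset (SimpleGraph (Fin (m + 1)))).filter
          (fun G => Compat (kap T) G ∧ G.edgeSet.ncard = m + l)) :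
        Finset (SimpleGraph (Fin (m + 1)))) : Set (SimpleGraph (Fin (m + 1)))) := by
    ext G
    simp only [Set.mem_ofPred_eq, Finset.coe_biUnion, Finset.coe_filter, Finset.mem_univ, true_and,
      Set.mem_iUnion, exists_prop, Nat.add_sub_cancel]
    constructor
    · rintro ⟨h1, h2⟩
      obtain ⟨κ, hv, hc⟩ := compat_exists h1
      obtain ⟨T, rfl⟩ := exists_kap hv
      exact ⟨T, (kap_valid T).1 hv, hc, h2⟩
    · rintro ⟨T, hT, hc, h2⟩
      exact ⟨compat_connected ((kap_valid T).2 hT) hc, h2⟩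
  unfold connGraphCount
  rw [hset, Set.ncard_coe_finset, Finset.card_biUnion]
  · refine Finset.sum_congr rfl fun T hT => ?_
    have hT' := (Finset.mem_filter.1 hT).2
    refine (card_compat ((kap_valid T).2 hT') l).trans ?_
    rw [kap_Mval hT', Int.toNat_natCast]
  · intro T hT T' hT' hne
    refine Finset.disjoint_left.2 ?_
    intro G hG hG'
    rw [Finset.mem_filter] at hG hG'
    exact hne (kap_inj (compat_unique ((kap_valid T).2 (Finset.mem_filter.1 hT).2)
      ((kap_valid T').2 (Finset.mem_filter.1 hT').2) hG.2.1 hG'.2.1))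

theorem ind_nonneg' (P : Prop) : 0 ≤ ind P := by
  unfold ind; split_ifs <;> norm_num

theorem denom_pos {m : ℕ} {p : ℝ} (hp : p ∈ Set.Ioc (0 : ℝ) 1) :
    0 < 1 - (1 - p) ^ (m + 1) := by
  have : (1 - p) ^ (m + 1) < 1 := pow_lt_one₀ (by linarith [hp.2]) (by linarith [hp.1]) (by omega)
  linarith

theorem treeProb_pos {m : ℕ} {p : ℝ} (hp : p ∈ Set.Ioc (0 : ℝ) 1) :
    0 < treeProb (m + 1) p := by
  have hd := denom_pos (m := m) hp
  have h1 : 0 ≤ 1 - p := by linarith [hp.2]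
  have h0 := hp.1
  unfold treeProb
  apply Finset.sum_pos'
  · intro T _
    apply mul_nonneg _ (ind_nonneg' _)
    unfold wt
    exact Finset.prod_nonneg fun j _ => by positivity
  · refine ⟨fun _ => 0, Finset.mem_univ _, ?_⟩
    apply mul_pos
    · unfold wt
      exact Finset.prod_pos fun j _ => by simp only [Fin.val_zero, pow_zero]; positivity
    · have : TREEevt (m + 1) (fun _ => 0) := by
        intro t h1 h2
        have : Finset.univ.filter (fun _ : Fin (m + 1 - 1) => ((0 : Fin (m + 1)) : ℕ) < t) =
            Finset.univ := Finset.filter_true_of_mem fun _ _ => by simp; omega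
        rw [this]; simpa using h2
      unfold ind
      rw [if_pos this]; norm_num

theorem term_eq {m l : ℕ} {p : ℝ} (hp : p ∈ Set.Ioc (0 : ℝ) 1) {T : Fin m → Fin (m + 1)}
    (hT : TREEevt (m + 1) T) :
    (1 - (1 - p) ^ (m + 1)) ^ m * (wt (m + 1) p T * binP p (Mval (m + 1) T) l) =
      ((Mval (m + 1) T).toNat.choose l : ℝ) * (p ^ (m + l) *
        (1 - p) ^ (((m + 1).choose 2 : ℤ) - (((m + 1 : ℕ) : ℤ) + l - 1))) := by
  have hd := (denom_pos (m := m) hp).ne'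
  have hwt : wt (m + 1) p T = p ^ m * (1 - p) ^ (∑ j : Fin m, (T j : ℕ)) /
      (1 - (1 - p) ^ (m + 1)) ^ m := by
    have : wt (m + 1) p T = ∏ j : Fin m, p * (1 - p) ^ ((T j : ℕ)) / (1 - (1 - p) ^ (m + 1)) := rfl
    rw [this, Finset.prod_div_distrib, Finset.prod_mul_distrib, Finset.prod_pow_eq_pow_sum]
    simp
  have hM : Mval (m + 1) T = ((m + 1).choose 2 : ℤ) - ∑ j : Fin m, ((T j : ℕ) + 1 : ℤ) := rfl
  obtain ⟨F, hF⟩ : ∃ F : ℕ, Mval (m + 1) T = F := ⟨_, kap_Mval hT⟩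
  rw [hwt]
  unfold binP
  rw [hF] at hM ⊢
  rw [Int.toNat_natCast]
  by_cases hl : l ≤ F
  · have he : ((m + 1).choose 2 : ℤ) - (((m + 1 : ℕ) : ℤ) + l - 1) =
        (((∑ j : Fin m, (T j : ℕ)) + (F - l) : ℕ) : ℤ) := by
      rw [Finset.sum_add_distrib] at hM
      simp only [Finset.sum_const, Finset.card_univ, Fintype.card_fin, nsmul_eq_mul,
        mul_one] at hM
      push_cast [Nat.cast_sub hl]
      linarith
    have hd' : (1 - (1 - p) ^ (m + 1)) ^ m ≠ 0 := pow_ne_zero _ hd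
    rw [he, zpow_natCast, pow_add p, pow_add (1 - p) (∑ j : Fin m, (T j : ℕ))]
    generalize (1 - (1 - p) ^ (m + 1)) ^ m = D at hd' ⊢
    generalize (1 - p) ^ (∑ j : Fin m, (T j : ℕ)) = X
    generalize (1 - p) ^ (F - l) = Y
    field_simp
  · rw [Nat.choose_eq_zero_of_lt (by omega)]
    simp

/-- the critical identity, Theorem `exactthm`:
for all `k ≥ 2`, `l ≥ 0` and `p ∈ (0,1]`,
`A₁ A₂ A₃ = C(k,l) p^{k+l-1} (1-p)^{C(k,2)-(k+l-1)}`. -/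
theorem exact_identity (k l : ℕ) (hk : 2 ≤ k) (p : ℝ) (hp : p ∈ Set.Ioc (0 : ℝ) 1) :
    (1 - (1 - p) ^ k) ^ (k - 1) * treeProb k p * A3 k l p =
      (connGraphCount k l : ℝ) * p ^ (k + l - 1) *
        (1 - p) ^ ((Nat.choose k 2 : ℤ) - ((k : ℤ) + l - 1)) := by
  classical
  obtain ⟨m, rfl⟩ : ∃ m, k = m + 1 := ⟨k - 1, by omega⟩
  have htp := (treeProb_pos (m := m) hp).ne'
  have hA : treeProb (m + 1) p * A3 (m + 1) l p =
      ∑ T : Fin m → Fin (m + 1), wt (m + 1) p T * ind (TREEevt (m + 1) T) *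
        binP p (Mval (m + 1) T) l := by
    unfold A3
    exact mul_div_cancel₀ _ htp
  have e1 : m + 1 - 1 = m := rfl
  have e2 : m + 1 + l - 1 = m + l := by omega
  rw [mul_assoc, hA, e1, e2, core, Nat.cast_sum, Finset.mul_sum, mul_assoc, Finset.sum_mul,
    Finset.sum_filter]
  refine Finset.sum_congr rfl fun T _ => ?_
  by_cases hT : TREEevt (m + 1) T
  · rw [if_pos hT, ← term_eq hp hT]
    unfold ind
    rw [if_pos hT, mul_one]
  · rw [if_neg hT]
    unfold ind
    rw [if_neg hT]
    simp
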